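/- arXiv:1501.05888 — 8 statements merged into one kernel-verified Lean document; each statement's English description precedes it below -/
import Mathlib

section
/- Let (t_k)_{k ∈ ℤ} be a strictly increasing sequence of real numbers, let ε > ε₁ > 0, let ω be a real number and let p ∈ ℤ be such that |t_{j+p} - t_j - ω| < ε₁ for every j ∈ ℤ. If k ∈ ℤ and t ∈ ℝ satisfy |t - t_i| > ε for all i ∈ ℤ and t_{k-1} < t < t_k, then t_{k+p-1} < t + ω < t_{k+p}. -/
/-- Lemma 2.3: if `ω` is an `ε₁`-almost period of the difference sequences of the
impulse points `t_k` (i.e. `|t_{j+p} - t_j - ω| < ε₁` for all `j`), `|t - t_i| > ε > ε₁`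
for all `i`, and `t_{k-1} < t < t_k`, then `t_{k+p-1} < t + ω < t_{k+p}`. -/
theorem shifted_point_between_impulses
    (t : ℤ → ℝ) (ht : StrictMono t) (ε ε₁ : ℝ) (hε₁ : 0 < ε₁) (hεε₁ : ε₁ < ε)
    (ω : ℝ) (p : ℤ) (hap : ∀ j : ℤ, |t (j + p) - t j - ω| < ε₁)
    (k : ℤ) (x : ℝ) (hx : ∀ i : ℤ, ε < |x - t i|)
    (hk1 : t (k - 1) < x) (hk2 : x < t k) :
    t (k + p - 1) < x + ω ∧ x + ω < t (k + p) := by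
  have h1 := abs_lt.mp (hap (k - 1))
  have h2 := abs_lt.mp (hap k)
  have h3 := hx (k - 1)
  have h4 := hx k
  rw [abs_of_pos (by linarith)] at h3
  rw [abs_of_neg (by linarith)] at h4
  rw [show k - 1 + p = k + p - 1 by ring] at h1
  constructor <;> linarith [h1.1, h1.2, h2.1, h2.2]
end

section
/- Let (γ_k)_{k ∈ ℤ} be a real sequence and let γ_L, Γ_M be constants such that γ_L > -1, γ_k ≥ γ_L for all k ∈ ℤ, and ∏_{i=q}^{p} (1+γ_i) ≤ Γ_M for all integers q ≤ p. Let ε ≥ 0 and let p ∈ ℤ satisfy |γ_{i+p} - γ_i| ≤ ε for all i ∈ ℤ. Then for all integers n ≤ k, | ∏_{i=n+p}^{k+p} (1+γ_i) - ∏_{i=n}^{k} (1+γ_i) | ≤ (Γ_M/(1+γ_L)) (k - n + 1) ε. -/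
theorem prod_sub_prod_aux (s : Finset ℤ) (a b : ℤ → ℝ) (c M ε : ℝ) (hc : 0 < c) (hε : 0 ≤ ε)
    (ha : ∀ i, c ≤ a i) (hb : ∀ i, c ≤ b i) (hab : ∀ i, a i - b i ≤ ε)
    (hM : ∏ i ∈ s, a i ≤ M) :
    ∏ i ∈ s, a i - ∏ i ∈ s, b i ≤ M / c * (s.card : ℝ) * ε := by
  have ha0 : ∀ i, 0 < a i := fun i => lt_of_lt_of_le hc (ha i)
  have hb0 : ∀ i, 0 < b i := fun i => lt_of_lt_of_le hc (hb i)
  have hA : 0 < ∏ i ∈ s, a i := Finset.prod_pos fun i _ => ha0 i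
  have hB : 0 < ∏ i ∈ s, b i := Finset.prod_pos fun i _ => hb0 i
  have h1 := Real.one_sub_inv_le_log_of_pos (div_pos hA hB)
  have h2 : Real.log ((∏ i ∈ s, a i) / ∏ i ∈ s, b i) ≤ s.card * (ε / c) := by
    rw [← Finset.prod_div_distrib,
      Real.log_prod (fun i _ => (div_pos (ha0 i) (hb0 i)).ne'), ← nsmul_eq_mul]
    refine Finset.sum_le_card_nsmul _ _ _ fun i _ => ?_
    have h3 := Real.log_le_sub_one_of_pos (div_pos (ha0 i) (hb0 i))
    have h4 : a i / b i - 1 = (a i - b i) / b i := by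
      have := (hb0 i).ne'
      field_simp
    have h5 : (a i - b i) / b i ≤ ε / b i :=
      div_le_div_of_nonneg_right (hab i) (hb0 i).le
    have h6 : ε / b i ≤ ε / c := div_le_div_of_nonneg_left hε hc (hb i)
    linarith
  have h7 : ∏ i ∈ s, a i - ∏ i ∈ s, b i
      = (∏ i ∈ s, a i) * (1 - ((∏ i ∈ s, a i) / ∏ i ∈ s, b i)⁻¹) := by
    rw [inv_div, mul_sub, mul_one, mul_div_cancel₀ _ hA.ne']
  have h8 : 0 ≤ (s.card : ℝ) * (ε / c) := by positivity
  calc ∏ i ∈ s, a i - ∏ i ∈ s, b i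
      = (∏ i ∈ s, a i) * (1 - ((∏ i ∈ s, a i) / ∏ i ∈ s, b i)⁻¹) := h7
    _ ≤ (∏ i ∈ s, a i) * (s.card * (ε / c)) :=
        mul_le_mul_of_nonneg_left (h1.trans h2) hA.le
    _ ≤ M * (s.card * (ε / c)) := mul_le_mul_of_nonneg_right hM h8
    _ = M / c * (s.card : ℝ) * ε := by ring

/-- Lemma 2.4: if `γ_L > -1`, `γ_k ≥ γ_L` for all `k`, all products
`Γ(q,p) = ∏_{i=q}^p (1+γ_i)` are bounded above by `Γ_M`, and
`|γ_{i+p} - γ_i| ≤ ε` for all `i`, then for all integers `n ≤ k`,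
`|Γ(n+p, k+p) - Γ(n,k)| ≤ (Γ_M/(1+γ_L)) (k-n+1) ε`. -/
theorem shifted_product_estimate
    (γ : ℤ → ℝ) (γL ΓM : ℝ) (hγL : -1 < γL) (hγ : ∀ k : ℤ, γL ≤ γ k)
    (hΓM : ∀ q p : ℤ, q ≤ p → ∏ i ∈ Finset.Icc q p, (1 + γ i) ≤ ΓM)
    (ε : ℝ) (hε : 0 ≤ ε) (p : ℤ) (hap : ∀ i : ℤ, |γ (i + p) - γ i| ≤ ε) :
    ∀ n k : ℤ, n ≤ k →
      |∏ i ∈ Finset.Icc (n + p) (k + p), (1 + γ i) - ∏ i ∈ Finset.Icc n k, (1 + γ i)|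
        ≤ ΓM / (1 + γL) * ((k - n + 1 : ℤ) : ℝ) * ε := by
  intro n k hnk
  have hs : ∏ i ∈ Finset.Icc (n + p) (k + p), (1 + γ i)
      = ∏ i ∈ Finset.Icc n k, (1 + γ (i + p)) := by
    rw [← Finset.map_add_right_Icc, Finset.prod_map]
    rfl
  have hM1 := hΓM (n + p) (k + p) (by omega)
  have hM2 := hΓM n k hnk
  have hcard : ((k - n + 1 : ℤ) : ℝ) = ((Finset.Icc n k).card : ℝ) := by
    rw [Int.card_Icc, ← Int.cast_natCast (R := ℝ), Int.toNat_of_nonneg (by omega)]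
    congr 1
    omega
  rw [hs] at hM1 ⊢
  rw [hcard, abs_sub_le_iff]
  have hc : 0 < 1 + γL := by linarith
  constructor
  · refine prod_sub_prod_aux _ (fun i => 1 + γ (i + p)) (fun i => 1 + γ i) _ _ _ hc hε
      (fun i => ?_) (fun i => ?_) (fun i => ?_) hM1
    · linarith [hγ (i + p)]
    · linarith [hγ i]
    · linarith [(abs_le.mp (hap i)).2]
  · refine prod_sub_prod_aux _ (fun i => 1 + γ i) (fun i => 1 + γ (i + p)) _ _ _ hc hε
      (fun i => ?_) (fun i => ?_) (fun i => ?_) hM2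
    · linarith [hγ i]
    · linarith [hγ (i + p)]
    · linarith [(abs_le.mp (hap i)).1]
end

section
/- Let (t_k)_{k ∈ ℤ} be a strictly increasing real sequence with t_{k+1} - t_k ≥ η for all k ∈ ℤ, where η > 0. Then for every α > 0, every ε with 0 < ε < η/2, and every t ∈ ℝ, Σ_{k : t_k < t} ∫_{t_k - ε}^{t_k + ε} e^{-α(t-s)} ds ≤ 2 e^{αη/2} ε/(1 - e^{-αη}). -/
/-- Lemma 2.5, second inequality: if the impulse points `t_k` (k ∈ ℤ) are strictly
increasing with gaps at least `η > 0`, then for every `α > 0`, `0 < ε < η/2` and `t ∈ ℝ`,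
`Σ_{t_k < t} ∫_{t_k-ε}^{t_k+ε} e^{-α(t-s)} ds ≤ 2 e^{αη/2} ε/(1 - e^{-αη})`. -/
theorem exp_integral_sum_over_impulses_le
    (t : ℤ → ℝ) (ht : StrictMono t) (η : ℝ) (hη : 0 < η)
    (hgap : ∀ k : ℤ, η ≤ t (k + 1) - t k) (α : ℝ) (hα : 0 < α)
    (ε : ℝ) (hε : 0 < ε) (hεη : ε < η / 2) (x : ℝ) :
    Summable (fun k : {k : ℤ // t k < x} =>
      ∫ s in (t k - ε)..(t k + ε), Real.exp (-α * (x - s))) ∧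
    ∑' k : {k : ℤ // t k < x}, ∫ s in (t k - ε)..(t k + ε), Real.exp (-α * (x - s))
      ≤ 2 * Real.exp (α * η / 2) * ε / (1 - Real.exp (-α * η)) := by
  have hstep : ∀ (m : ℤ) (n : ℕ), t m + n * η ≤ t (m + n) := by
    intro m n
    induction n with
    | zero => simp
    | succ n ih =>
      have h := hgap (m + n)
      push_cast
      rw [← add_assoc]
      linarith
  have hne : ∃ k : ℤ, t k < x := by
    obtain ⟨n, hn⟩ := exists_nat_gt ((t 0 - x) / η)
    rw [div_lt_iff₀ hη] at hn
    refine ⟨-(n : ℤ), ?_⟩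
    have h := hstep (-(n : ℤ)) n
    simp only [neg_add_cancel] at h
    linarith
  have hbd : ∃ b : ℤ, ∀ k : ℤ, t k < x → k ≤ b := by
    obtain ⟨n, hn⟩ := exists_nat_gt ((x - t 0) / η)
    rw [div_lt_iff₀ hη] at hn
    refine ⟨n, fun k hk => ?_⟩
    have h := hstep 0 n
    simp only [zero_add] at h
    exact (ht.lt_iff_lt.mp (by linarith : t k < t n)).le
  obtain ⟨K, hK, hmax⟩ := Int.exists_greatest_of_bdd hbd hne
  set r : ℝ := Real.exp (-α * η) with hr
  have hr0 : 0 ≤ r := (Real.exp_pos _).le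
  have hr1 : r < 1 := by
    rw [hr, Real.exp_lt_one_iff]
    nlinarith [mul_pos hα hη]
  set C : ℝ := 2 * Real.exp (α * η / 2) * ε with hC
  have hC0 : 0 ≤ C := by positivity
  let g : ℕ → ℝ := fun n => C * r ^ n
  have hg : HasSum g (C * (1 - r)⁻¹) := (hasSum_geometric_of_lt_one hr0 hr1).mul_left C
  let i : {k : ℤ // t k < x} → ℕ := fun k => (K - k.1).toNat
  have hi : Function.Injective i := by
    intro a b hab
    have h1 := hmax a.1 a.2
    have h2 := hmax b.1 b.2
    apply Subtype.ext
    simp only [i] at hab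
    omega
  have hnn : ∀ k : {k : ℤ // t k < x},
      0 ≤ ∫ s in (t k - ε)..(t k + ε), Real.exp (-α * (x - s)) := fun k =>
    intervalIntegral.integral_nonneg (by linarith) (fun s _ => (Real.exp_pos _).le)
  have hle : ∀ k : {k : ℤ // t k < x},
      ∫ s in (t k - ε)..(t k + ε), Real.exp (-α * (x - s)) ≤ g (i k) := by
    intro k
    have hk := hmax k.1 k.2
    have hcast : (k.1 : ℤ) + ((i k : ℕ) : ℤ) = K := by
      simp only [i]; omega
    have h := hstep k.1 (i k)
    rw [hcast] at h
    have hb : ∫ s in (t k - ε)..(t k + ε), Real.exp (-α * (x - s)) ≤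
        ∫ _s in (t k - ε)..(t k + ε), Real.exp (α * η / 2) * r ^ (i k) := by
      apply intervalIntegral.integral_mono_on (by linarith)
      · exact Continuous.intervalIntegrable (by fun_prop) _ _
      · exact intervalIntegrable_const
      · intro s hs
        rw [hr, ← Real.exp_nat_mul, ← Real.exp_add]
        apply Real.exp_le_exp.mpr
        have : (i k : ℝ) * η - η / 2 ≤ x - s := by linarith [hs.2]
        nlinarith [mul_le_mul_of_nonneg_left this hα.le]
    refine hb.trans (le_of_eq ?_)
    rw [intervalIntegral.integral_const, smul_eq_mul]
    simp only [g, hC]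
    ring
  have hgi : Summable (fun k => g (i k)) := hg.summable.comp_injective hi
  have hs := Summable.of_nonneg_of_le hnn hle hgi
  refine ⟨hs, (hs.tsum_le_tsum hle hgi).trans ?_⟩
  rw [div_eq_mul_inv, ← hg.tsum_eq]
  exact tsum_comp_le_tsum_of_inj hg.summable (fun n => by positivity) hi
end

section
/- Let a : ℝ → ℝ be continuous with a(r) ≥ a_L > 0 for all r ∈ ℝ, let ω ∈ ℝ and ε > 0 satisfy |a(r + ω) - a(r)| ≤ ε for all r ∈ ℝ. Then for all real numbers s ≤ t, | exp(-∫_s^t a(r+ω) dr) - exp(-∫_s^t a(r) dr) | ≤ (2/a_L) ε e^{-a_L (t-s)/2}. -/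
theorem exp_diff_aux (u v M : ℝ) (hu : u ≤ M) (h : v ≤ u) :
    Real.exp u - Real.exp v ≤ (u - v) * Real.exp M := by
  have h1 : Real.exp v = Real.exp u * Real.exp (v - u) := by
    rw [← Real.exp_add]; congr 1; ring
  have h2 := Real.add_one_le_exp (v - u)
  have h3 := Real.exp_pos u
  have h4 := Real.exp_le_exp.mpr hu
  calc Real.exp u - Real.exp v ≤ (u - v) * Real.exp u := by rw [h1]; nlinarith
    _ ≤ (u - v) * Real.exp M := mul_le_mul_of_nonneg_left h4 (by linarith)

theorem exp_diff_abs_aux (u v M : ℝ) (hu : u ≤ M) (hv : v ≤ M) :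
    |Real.exp u - Real.exp v| ≤ |u - v| * Real.exp M := by
  rcases le_total v u with h | h
  · rw [abs_of_nonneg (sub_nonneg.mpr (Real.exp_le_exp.mpr h)), abs_of_nonneg (sub_nonneg.mpr h)]
    exact exp_diff_aux u v M hu h
  · rw [abs_sub_comm, abs_sub_comm u v,
      abs_of_nonneg (sub_nonneg.mpr (Real.exp_le_exp.mpr h)), abs_of_nonneg (sub_nonneg.mpr h)]
    exact exp_diff_aux v u M hv h

/-- Inequality (13), Case 1 of Lemma 2.7: if `a` is continuous with `a ≥ a_L > 0` and
`ω` is an `ε`-almost period of `a` (i.e. `|a(r+ω) - a(r)| ≤ ε` for all `r`), then for all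
`s ≤ t`, `|exp(-∫_s^t a(r+ω) dr) - exp(-∫_s^t a(r) dr)| ≤ (2/a_L) ε e^{-a_L(t-s)/2}`. -/
theorem exp_integral_shift_estimate
    (a : ℝ → ℝ) (ha : Continuous a) (aL : ℝ) (haL : 0 < aL)
    (hge : ∀ r : ℝ, aL ≤ a r) (ω ε : ℝ) (hε : 0 < ε)
    (hap : ∀ r : ℝ, |a (r + ω) - a r| ≤ ε) :
    ∀ s t : ℝ, s ≤ t →
      |Real.exp (-∫ r in s..t, a (r + ω)) - Real.exp (-∫ r in s..t, a r)|
        ≤ 2 / aL * ε * Real.exp (-aL * (t - s) / 2) := by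
  intro s t hst
  have hc : Continuous fun r => a (r + ω) := by fun_prop
  have low : ∀ f : ℝ → ℝ, Continuous f → (∀ r, aL ≤ f r) →
      -∫ r in s..t, f r ≤ -(aL * (t - s)) := by
    intro f hf hl
    have := intervalIntegral.integral_mono_on (μ := MeasureTheory.volume) hst
      (continuous_const.intervalIntegrable s t)
      (hf.intervalIntegrable s t) (fun r _ => hl r)
    rw [intervalIntegral.integral_const, smul_eq_mul] at this
    linarith
  have h1 := exp_diff_abs_aux _ _ _ (low _ hc fun r => hge _) (low _ ha hge)
  have h2 : |(-∫ r in s..t, a (r + ω)) - (-∫ r in s..t, a r)| ≤ ε * (t - s) := by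
    have h := intervalIntegral.norm_integral_le_of_norm_le_const
      (a := s) (b := t) (f := fun r => a (r + ω) - a r) (C := ε) (fun r _ => hap r)
    rw [intervalIntegral.integral_sub (hc.intervalIntegrable s t) (ha.intervalIntegrable s t),
      Real.norm_eq_abs, abs_of_nonneg (sub_nonneg.mpr hst)] at h
    rwa [neg_sub_neg, abs_sub_comm]
  refine h1.trans ((mul_le_mul_of_nonneg_right h2 (Real.exp_pos _).le).trans ?_)
  have e1 : Real.exp (-(aL * (t - s)))
      = Real.exp (-aL * (t - s) / 2) * Real.exp (-aL * (t - s) / 2) := by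
    rw [← Real.exp_add]; congr 1; ring
  have hx : aL * (t - s) / 2 * Real.exp (-aL * (t - s) / 2) ≤ 1 := by
    have h3 := Real.add_one_le_exp (aL * (t - s) / 2)
    have h4 : Real.exp (aL * (t - s) / 2) * Real.exp (-aL * (t - s) / 2) = 1 := by
      rw [← Real.exp_add, ← Real.exp_zero]; congr 1; ring
    have h5 := Real.exp_pos (-aL * (t - s) / 2)
    nlinarith
  rw [e1]
  calc ε * (t - s) * (Real.exp (-aL * (t - s) / 2) * Real.exp (-aL * (t - s) / 2))
      = (2 / aL * ε * Real.exp (-aL * (t - s) / 2)) *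
        (aL * (t - s) / 2 * Real.exp (-aL * (t - s) / 2)) := by field_simp
    _ ≤ (2 / aL * ε * Real.exp (-aL * (t - s) / 2)) * 1 :=
        mul_le_mul_of_nonneg_left hx (by positivity)
    _ = _ := mul_one _
end

section
/- Let (t_k)_{k ∈ ℤ} be a strictly increasing real sequence with t_{k+1} - t_k ≥ η > 0 for all k. Let (γ_k)_{k ∈ ℤ} be a real sequence with γ_k ≥ γ_L > -1 for all k and ∏_{i=n}^{k}(1+γ_i) ≤ Γ_M for all n ≤ k. Let a : ℝ → ℝ be continuous with a(r) ≥ a_L > 0 for all r. Define H(t,s) = (∏_{k ∈ ℤ, s ≤ t_k < t} (1+γ_k)) · exp(-∫_s^t a(r) dr) for s ≤ t. Let 0 < ε₁ < ε < η/2, ω ∈ ℝ and p ∈ ℤ satisfy: |a(r+ω) - a(r)| ≤ ε for all r ∈ ℝ, |γ_{k+p} - γ_k| ≤ ε for all k ∈ ℤ, and |t_{k+p} - t_k - ω| ≤ ε₁ for all k ∈ ℤ. Set M = max{ 2/a_L, Γ_M [ 2/a_L + (1/(1+γ_L)) (1 + 2/(a_L η)) ] }. Then for all s ≤ t such that |t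 - t_k| > ε and |s - t_k| > ε for every k ∈ ℤ, one has |H(t+ω, s+ω) - H(t,s)| ≤ ε M e^{-a_L (t-s)/2}. -/
theorem aux_exp (u v c : ℝ) (hu : u ≤ c) (hv : v ≤ c) :
    |Real.exp u - Real.exp v| ≤ Real.exp c * |u - v| := by
  wlog h : v ≤ u generalizing u v with H
  · rw [abs_sub_comm, abs_sub_comm u v]
    exact H v u hv hu (le_of_not_ge h)
  have h1 : Real.exp v ≤ Real.exp u := Real.exp_le_exp.2 h
  rw [abs_of_nonneg (by linarith), abs_of_nonneg (by linarith)]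
  have h2 : Real.exp v = Real.exp u * Real.exp (v - u) := by
    rw [← Real.exp_add]; congr 1; ring
  have h3 := Real.add_one_le_exp (v - u)
  have h4 : Real.exp u ≤ Real.exp c := Real.exp_le_exp.2 hu
  have h5 := Real.exp_pos u
  calc Real.exp u - Real.exp v = Real.exp u * (1 - Real.exp (v - u)) := by rw [h2]; ring
    _ ≤ Real.exp u * (u - v) := by
        apply mul_le_mul_of_nonneg_left _ h5.le; linarith
    _ ≤ _ := mul_le_mul_of_nonneg_right h4 (by linarith)

theorem aux_log (x y c : ℝ) (hc : 0 < c) (hx : c ≤ x) (hy : c ≤ y) :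
    |Real.log x - Real.log y| ≤ |x - y| / c := by
  wlog h : y ≤ x generalizing x y with H
  · rw [abs_sub_comm, abs_sub_comm x y]
    exact H y x hy hx (le_of_not_ge h)
  have hy0 : 0 < y := by linarith
  have hx0 : 0 < x := by linarith
  have h1 : Real.log y ≤ Real.log x := Real.log_le_log hy0 h
  rw [abs_of_nonneg (by linarith), abs_of_nonneg (by linarith), ← Real.log_div hx0.ne' hy0.ne']
  have h2 := Real.log_le_sub_one_of_pos (div_pos hx0 hy0)
  calc _ ≤ x / y - 1 := h2
    _ = (x - y) / y := by field_simp
    _ ≤ _ := div_le_div_of_nonneg_left (by linarith) hc hy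

theorem aux_prod (S : Finset ℤ) (f g : ℤ → ℝ) (c e G : ℝ) (hc : 0 < c)
    (hf : ∀ k, c ≤ f k) (hg : ∀ k, c ≤ g k) (hfg : ∀ k, |f k - g k| ≤ e)
    (h1 : ∏ k ∈ S, f k ≤ G) (h2 : ∏ k ∈ S, g k ≤ G) :
    |∏ k ∈ S, f k - ∏ k ∈ S, g k| ≤ G * (S.card * (e / c)) := by
  have pf : 0 < ∏ k ∈ S, f k := Finset.prod_pos fun k _ => hc.trans_le (hf k)
  have pg : 0 < ∏ k ∈ S, g k := Finset.prod_pos fun k _ => hc.trans_le (hg k)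
  have hG : 0 < G := pf.trans_le h1
  have h := aux_exp (Real.log (∏ k ∈ S, f k)) (Real.log (∏ k ∈ S, g k)) (Real.log G)
    (Real.log_le_log pf h1) (Real.log_le_log pg h2)
  rw [Real.exp_log pf, Real.exp_log pg, Real.exp_log hG] at h
  refine h.trans (mul_le_mul_of_nonneg_left ?_ hG.le)
  rw [Real.log_prod (fun k _ => (hc.trans_le (hf k)).ne'),
    Real.log_prod (fun k _ => (hc.trans_le (hg k)).ne'), ← Finset.sum_sub_distrib]
  refine (Finset.abs_sum_le_sum_abs _ _).trans ?_
  rw [← nsmul_eq_mul]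
  apply Finset.sum_le_card_nsmul
  intro k _
  exact (aux_log _ _ c hc (hf k) (hg k)).trans (div_le_div_of_nonneg_right (hfg k) hc.le)

theorem aux_gap (t : ℤ → ℝ) (η : ℝ) (hgap : ∀ k : ℤ, η ≤ t (k + 1) - t k) (j k : ℤ)
    (h : j ≤ k) : ((k : ℝ) - j) * η ≤ t k - t j := by
  induction k, h using Int.le_induction with
  | base => simp
  | succ k _ ih =>
    have := hgap k
    push_cast
    linarith

theorem aux_set (t : ℤ → ℝ) (ht : StrictMono t) (η : ℝ) (hη : 0 < η)
    (hgap : ∀ k : ℤ, η ≤ t (k + 1) - t k) (s x : ℝ) :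
    (∀ k, ¬ (s ≤ t k ∧ t k < x)) ∨
    ∃ m n : ℤ, m ≤ n ∧ (∀ k, (s ≤ t k ∧ t k < x) ↔ k ∈ Finset.Icc m n) ∧
      ((n : ℝ) - m) * η ≤ x - s := by
  by_cases h : ∀ k, ¬ (s ≤ t k ∧ t k < x)
  · exact Or.inl h
  right
  push Not at h
  obtain ⟨k0, h0s, h0x⟩ := h
  obtain ⟨N, hN⟩ := exists_nat_gt ((x - s) / η)
  have hN' : x - s < N * η := by rwa [div_lt_iff₀ hη] at hN
  have key : ∀ j k : ℤ, s ≤ t j → t k < x → j ≤ k → k ≤ j + N := by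
    intro j k hj hk hjk
    have h1 := aux_gap t η hgap j k hjk
    have h2 : ((k : ℝ) - j) * η < N * η := by linarith
    have h3 : (k : ℝ) - j < N := lt_of_mul_lt_mul_right h2 hη.le
    have h4 : (k : ℝ) < ((j + N : ℤ) : ℝ) := by push_cast; linarith
    exact (Int.cast_lt.1 h4).le
  obtain ⟨n, hn, hnmax⟩ := Int.exists_greatest_of_bdd (P := fun k => s ≤ t k ∧ t k < x)
    ⟨k0 + N, fun z hz => by
      rcases le_total k0 z with h | h
      · exact key k0 z h0s hz.2 h
      · omega⟩ ⟨k0, h0s, h0x⟩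
  obtain ⟨m, hm, hmmin⟩ := Int.exists_least_of_bdd (P := fun k => s ≤ t k ∧ t k < x)
    ⟨k0 - N, fun z hz => by
      rcases le_total z k0 with h | h
      · have := key z k0 hz.1 h0x h
        omega
      · omega⟩ ⟨k0, h0s, h0x⟩
  refine ⟨m, n, hmmin n hn, fun k => ?_, ?_⟩
  · rw [Finset.mem_Icc]
    refine ⟨fun hk => ⟨hmmin k hk, hnmax k hk⟩, fun ⟨h1, h2⟩ => ?_⟩
    exact ⟨hm.1.trans (ht.monotone h1), (ht.monotone h2).trans_lt hn.2⟩
  · have := aux_gap t η hgap m n (hmmin n hn)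
    linarith [hm.1, hn.2]


/-- The Cauchy function `H(t,s)` of the linear impulsive equation
`ẏ = -a(t) y`, `Δy(t_k) = γ_k y(t_k⁻)`: for `s ≤ x` it is the product of `(1+γ_k)`
over all impulse points `t_k ∈ [s, x)` times `exp(-∫_s^x a(r) dr)`. -/
noncomputable def cauchyH (t γ : ℤ → ℝ) (a : ℝ → ℝ) (x s : ℝ) : ℝ :=
  (∏ᶠ (k : ℤ) (_ : s ≤ t k ∧ t k < x), (1 + γ k)) * Real.exp (-∫ r in s..x, a r)

/-- Lemma 2.7: almost-periodicity estimate for the Cauchy function. If `ω` is a common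
`ε`-almost period of `a`, of `(γ_k)` (with shift `p`) and `ε₁`-almost period of the
impulse times, then `|H(t+ω, s+ω) - H(t,s)| ≤ ε M e^{-a_L(t-s)/2}` for all `s ≤ t`
staying at distance more than `ε` from every impulse point, where
`M = max{2/a_L, Γ_M [2/a_L + (1/(1+γ_L))(1 + 2/(a_L η))]}`. -/
theorem cauchy_function_almost_periodicity
    (t : ℤ → ℝ) (ht : StrictMono t) (η : ℝ) (hη : 0 < η)
    (hgap : ∀ k : ℤ, η ≤ t (k + 1) - t k)
    (γ : ℤ → ℝ) (γL ΓM : ℝ) (hγL : -1 < γL) (hγ : ∀ k : ℤ, γL ≤ γ k)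
    (hΓM : ∀ n k : ℤ, n ≤ k → ∏ i ∈ Finset.Icc n k, (1 + γ i) ≤ ΓM)
    (a : ℝ → ℝ) (ha : Continuous a) (aL : ℝ) (haL : 0 < aL) (haL' : ∀ r : ℝ, aL ≤ a r)
    (ε ε₁ : ℝ) (hε₁ : 0 < ε₁) (hε₁ε : ε₁ < ε) (hεη : ε < η / 2)
    (ω : ℝ) (p : ℤ)
    (hapa : ∀ r : ℝ, |a (r + ω) - a r| ≤ ε)
    (hapγ : ∀ k : ℤ, |γ (k + p) - γ k| ≤ ε)
    (hapt : ∀ k : ℤ, |t (k + p) - t k - ω| ≤ ε₁)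
    (M : ℝ) (hM : M = max (2 / aL) (ΓM * (2 / aL + 1 / (1 + γL) * (1 + 2 / (aL * η))))) :
    ∀ s x : ℝ, s ≤ x → (∀ k : ℤ, ε < |x - t k|) → (∀ k : ℤ, ε < |s - t k|) →
      |cauchyH t γ a (x + ω) (s + ω) - cauchyH t γ a x s|
        ≤ ε * M * Real.exp (-aL * (x - s) / 2) := by
  intro s x hsx hx hs
  have hε : 0 < ε := hε₁.trans hε₁ε
  have hcond : ∀ k : ℤ, (s + ω ≤ t (k + p) ∧ t (k + p) < x + ω) ↔ (s ≤ t k ∧ t k < x) := by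
    intro k
    have h1 := abs_le.1 (hapt k)
    have h2 := lt_abs.1 (hx k)
    have h3 := lt_abs.1 (hs k)
    constructor
    · rintro ⟨h4, h5⟩
      constructor
      · rcases h3 with h | h <;> linarith
      · rcases h2 with h | h <;> linarith
    · rintro ⟨h4, h5⟩
      constructor
      · rcases h3 with h | h <;> linarith
      · rcases h2 with h | h <;> linarith
  have hcond' : ∀ k : ℤ, (s + ω ≤ t k ∧ t k < x + ω) ↔ (s ≤ t (k - p) ∧ t (k - p) < x) := by
    intro k
    have := hcond (k - p)
    rwa [sub_add_cancel] at this
  unfold cauchyH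
  rw [← intervalIntegral.integral_comp_add_right (fun r => a r) ω]
  set T := x - s with hT
  have hT0 : 0 ≤ T := by linarith
  have ha' : Continuous fun r => a (r + ω) := by fun_prop
  have lowb : ∀ f : ℝ → ℝ, Continuous f → (∀ r, aL ≤ f r) → aL * T ≤ ∫ r in s..x, f r := by
    intro f hf hfl
    have := intervalIntegral.integral_mono_on (μ := MeasureTheory.volume) hsx
      (intervalIntegrable_const (c := aL))
      (hf.intervalIntegrable s x) (fun r _ => hfl r)
    rw [intervalIntegral.integral_const, smul_eq_mul] at this
    linarith
  have hA := lowb a ha haL'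
  have hA' := lowb _ ha' (fun r => haL' _)
  have hd : |(∫ r in s..x, a (r + ω)) - ∫ r in s..x, a r| ≤ ε * T := by
    rw [← intervalIntegral.integral_sub (ha'.intervalIntegrable s x) (ha.intervalIntegrable s x)]
    have := intervalIntegral.norm_integral_le_of_norm_le_const (a := s) (b := x) (C := ε)
      (f := fun r => a (r + ω) - a r) (fun r _ => hapa r)
    rwa [Real.norm_eq_abs, abs_of_nonneg (by linarith : 0 ≤ x - s)] at this
  generalize (∫ r in s..x, a (r + ω)) = A' at *
  generalize (∫ r in s..x, a r) = A at *
  set E := Real.exp (-aL * T / 2) with hE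
  have hE0 : 0 < E := Real.exp_pos _
  have hE1 : E ≤ 1 := Real.exp_le_one_iff.2 (by have := mul_nonneg haL.le hT0; linarith)
  have hEE : Real.exp (-(aL * T)) = E * E := by
    rw [hE, ← Real.exp_add]; congr 1; ring
  have hTE : T * E ≤ 2 / aL := by
    have h1 := Real.add_one_le_exp (aL * T / 2)
    have h2 : Real.exp (aL * T / 2) * E = 1 := by
      rw [hE, ← Real.exp_add, Real.exp_eq_one_iff]; ring
    rw [le_div_iff₀ haL]
    nlinarith
  have hexp : |Real.exp (-A') - Real.exp (-A)| ≤ ε * E * (2 / aL) := by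
    have h1 := aux_exp (-A') (-A) (-(aL * T)) (by linarith) (by linarith)
    have h2 : |-A' - -A| = |A' - A| := by rw [← abs_neg]; congr 1; ring
    rw [h2, hEE] at h1
    calc _ ≤ _ := h1
      _ ≤ E * E * (ε * T) := by gcongr
      _ = ε * E * (T * E) := by ring
      _ ≤ _ := by gcongr
  rcases aux_set t ht η hη hgap s x with hemp | ⟨m, n, hmn, hS, hlen⟩
  · have e1 : ∀ k, (s ≤ t k ∧ t k < x) ↔ False := fun k => iff_false_intro (hemp k)
    simp only [hcond', e1, finprod_false, finprod_one, one_mul]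
    calc _ ≤ _ := hexp
      _ = ε * (2 / aL) * E := by ring
      _ ≤ _ := by
        rw [hM]
        gcongr
        exact le_max_left _ _
  · have e1 : (∏ᶠ (k : ℤ) (_ : s ≤ t k ∧ t k < x), (1 + γ k))
        = ∏ k ∈ Finset.Icc m n, (1 + γ k) := by
      simp only [hS]
      exact finprod_mem_coe_finset (fun k => 1 + γ k) (Finset.Icc m n)
    have e2 : (∏ᶠ (k : ℤ) (_ : s + ω ≤ t k ∧ t k < x + ω), (1 + γ k))
        = ∏ k ∈ Finset.Icc (m + p) (n + p), (1 + γ k) := by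
      have : ∀ k, (s + ω ≤ t k ∧ t k < x + ω) ↔ k ∈ Finset.Icc (m + p) (n + p) := by
        intro k
        rw [hcond', hS, Finset.mem_Icc, Finset.mem_Icc]
        omega
      simp only [this]
      exact finprod_mem_coe_finset (fun k => 1 + γ k) (Finset.Icc (m + p) (n + p))
    have b2 := hΓM (m + p) (n + p) (by omega)
    have b1 := hΓM m n hmn
    have e3 : ∏ k ∈ Finset.Icc (m + p) (n + p), (1 + γ k)
        = ∏ k ∈ Finset.Icc m n, (1 + γ (k + p)) := by
      rw [← Finset.map_add_right_Icc, Finset.prod_map]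
      rfl
    rw [e1, e2, e3]
    rw [e3] at b2
    have hc : 0 < 1 + γL := by linarith
    have hP := aux_prod (Finset.Icc m n) (fun k => 1 + γ (k + p)) (fun k => 1 + γ k) (1 + γL) ε ΓM
      hc (fun k => by linarith [hγ (k + p)]) (fun k => by linarith [hγ k])
      (fun k => by
        have := hapγ k
        rwa [add_sub_add_left_eq_sub]) b2 b1
    have hcard : ((Finset.Icc m n).card : ℝ) ≤ 1 + T / η := by
      have h1 : (((Finset.Icc m n).card : ℤ) : ℝ) = n + 1 - m := by
        rw [Int.card_Icc_of_le _ _ (by omega)]; push_cast; ring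
      rw [Int.cast_natCast] at h1
      have : (n : ℝ) - m ≤ T / η := by rwa [le_div_iff₀ hη]
      linarith
    have pP' : 0 < ∏ k ∈ Finset.Icc m n, (1 + γ (k + p)) :=
      Finset.prod_pos fun k _ => by linarith [hγ (k + p)]
    generalize (∏ k ∈ Finset.Icc m n, (1 + γ (k + p))) = P' at *
    generalize (∏ k ∈ Finset.Icc m n, (1 + γ k)) = P at *
    generalize ((Finset.Icc m n).card : ℝ) = N at *
    have hΓ : 0 < ΓM := pP'.trans_le b2
    have hNE : (1 + T / η) * E ≤ 1 + 2 / (aL * η) := by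
      have : T * E / η ≤ 2 / aL / η := by gcongr
      rw [div_div] at this
      calc (1 + T / η) * E = E + T * E / η := by ring
        _ ≤ _ := by linarith
    have hEA : Real.exp (-A) ≤ E * E := by
      rw [← hEE]; exact Real.exp_le_exp.2 (by linarith)
    have hsplit : P' * Real.exp (-A') - P * Real.exp (-A)
        = P' * (Real.exp (-A') - Real.exp (-A)) + (P' - P) * Real.exp (-A) := by ring
    rw [hsplit]
    refine (abs_add_le _ _).trans ?_
    rw [abs_mul, abs_mul, abs_of_pos pP', abs_of_pos (Real.exp_pos _)]
    have i1 : P' * |Real.exp (-A') - Real.exp (-A)| ≤ ΓM * (ε * E * (2 / aL)) := by gcongr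
    have i2 : |P' - P| * Real.exp (-A) ≤ ΓM * ((1 + T / η) * (ε / (1 + γL))) * (E * E) := by
      have : |P' - P| ≤ ΓM * ((1 + T / η) * (ε / (1 + γL))) := hP.trans (by gcongr)
      gcongr
    have i3 : ΓM * ((1 + T / η) * (ε / (1 + γL))) * (E * E)
        ≤ ΓM * (ε / (1 + γL)) * E * (1 + 2 / (aL * η)) := by
      calc _ = ΓM * (ε / (1 + γL)) * E * ((1 + T / η) * E) := by ring
        _ ≤ _ := by gcongr
    calc _ ≤ ΓM * (ε * E * (2 / aL)) + ΓM * (ε / (1 + γL)) * E * (1 + 2 / (aL * η)) := by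
          linarith
      _ = ε * (ΓM * (2 / aL + 1 / (1 + γL) * (1 + 2 / (aL * η)))) * E := by ring
      _ ≤ _ := by
        rw [hM]
        gcongr
        exact le_max_right _ _
end

section
/- Let (t_k)_{k ∈ ℤ} be a strictly increasing real sequence with t_{k+1} - t_k ≥ η > 0, let (γ_k)_{k ∈ ℤ} satisfy 0 < Γ_L ≤ ∏_{i=n}^{k}(1+γ_i) ≤ Γ_M for all n ≤ k, let a : ℝ → ℝ be continuous with 0 < a_L ≤ a(r) ≤ a_M, and define H(t,s) = (∏_{k : s ≤ t_k < t}(1+γ_k)) exp(-∫_s^t a(r) dr) for s ≤ t and A = max(Γ_M, 1). Let m ≥ 1, let α_i, β_i > 0, T > 0, and for i = 1,…,m let b_i, c_i : ℝ → ℝ be nonnegative with b_i(s) ≤ b_{iM}, c_i(s) ≤ c_{iM}; let v_i : [0,T] → ℝ be nonnegative integrable with ∫_0^T v_i(r) dr = 1; let H_i : ℝ × [0,∞) → ℝ satisfy 0 ≤ H_{iL} ≤ H_i(s,x) for all s ∈ ℝ, x ≥ 0; let τ_i, σ_i : ℝ → [0,∞); and let (δ_k)_{k ∈ ℤ} satisfy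 δ_k ≤ δ_M with δ_M ≥ 0. Let φ : ℝ → ℝ be nonnegative and define g(s) = Σ_{i=1}^m [ b_i(s)/(1 + φ(s - τ_i(s))^{α_i}) + c_i(s) ∫_0^T v_i(r)/(1 + φ(s - r)^{β_i}) dr - H_i(s, φ(s - σ_i(s))) ]. Assume C := Σ_{i=1}^m (b_{iM} + c_{iM} - H_{iL}) ≥ 0 and that s ↦ H(t,s) g(s) is integrable on (-∞, t]. Then ∫_{-∞}^t H(t,s) g(s) ds + Σ_{k : t_k < t} H(t, t_k) δ_k ≤ (A/a_L) C + A δ_M/(1 - e^{-a_L η}). -/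
open MeasureTheory

theorem aux_growth (t : ℤ → ℝ) (η : ℝ) (hgap : ∀ k : ℤ, η ≤ t (k + 1) - t k)
    (j : ℤ) (n : ℕ) : t j + η * n ≤ t (j + n) := by
  induction n with
  | zero => simp
  | succ n ih =>
    have := hgap (j + n)
    push_cast
    rw [← add_assoc]
    linarith

theorem aux_growth_le (t : ℤ → ℝ) (η : ℝ) (hgap : ∀ k : ℤ, η ≤ t (k + 1) - t k)
    (j k : ℤ) (h : j ≤ k) : t j + η * ((k - j : ℤ) : ℝ) ≤ t k := by
  have := aux_growth t η hgap j (k - j).toNat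
  have e : (((k - j).toNat : ℕ) : ℤ) = k - j := Int.toNat_of_nonneg (by omega)
  have e' : (((k - j).toNat : ℕ) : ℝ) = ((k - j : ℤ) : ℝ) := by exact_mod_cast congrArg (Int.cast (R := ℝ)) e
  rw [e, e'] at this
  simpa using this

theorem aux_prod_s9 (t : ℤ → ℝ) (ht : StrictMono t) (η : ℝ) (hη : 0 < η)
    (hgap : ∀ k : ℤ, η ≤ t (k + 1) - t k)
    (γ : ℤ → ℝ) (ΓL ΓM : ℝ) (hΓL : 0 < ΓL)
    (hΓ : ∀ n k : ℤ, n ≤ k →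
      ΓL ≤ ∏ i ∈ Finset.Icc n k, (1 + γ i) ∧ ∏ i ∈ Finset.Icc n k, (1 + γ i) ≤ ΓM)
    (x s : ℝ) :
    0 ≤ (∏ᶠ (k : ℤ) (_ : s ≤ t k ∧ t k < x), (1 + γ k)) ∧
    (∏ᶠ (k : ℤ) (_ : s ≤ t k ∧ t k < x), (1 + γ k)) ≤ max ΓM 1 := by
  by_cases hne : ∃ j, s ≤ t j ∧ t j < x
  · obtain ⟨j, hj⟩ := hne
    obtain ⟨N, hN⟩ := exists_nat_gt ((x - s) / η)
    rw [div_lt_iff₀ hη] at hN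
    have hup : ∀ k, (s ≤ t k ∧ t k < x) → k ≤ j + N := by
      intro k hk
      by_contra hcon
      have h1 := aux_growth_le t η hgap j k (by omega)
      have h2 : (N : ℝ) ≤ ((k - j : ℤ) : ℝ) := by
        have : (N : ℤ) ≤ k - j := by omega
        exact_mod_cast this
      nlinarith [hj.1, hk.2]
    have hlo : ∀ k, (s ≤ t k ∧ t k < x) → j - N ≤ k := by
      intro k hk
      by_contra hcon
      have h1 := aux_growth_le t η hgap k j (by omega)
      have h2 : (N : ℝ) ≤ ((j - k : ℤ) : ℝ) := by
        have : (N : ℤ) ≤ j - k := by omega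
        exact_mod_cast this
      nlinarith [hj.2, hk.1]
    obtain ⟨K, hK, hKmax⟩ := Int.exists_greatest_of_bdd (P := fun k => s ≤ t k ∧ t k < x)
      ⟨j + N, hup⟩ ⟨j, hj⟩
    obtain ⟨n, hn, hnmin⟩ := Int.exists_least_of_bdd (P := fun k => s ≤ t k ∧ t k < x)
      ⟨j - N, hlo⟩ ⟨j, hj⟩
    have hset : ∀ k, (s ≤ t k ∧ t k < x) ↔ k ∈ Finset.Icc n K := by
      intro k
      rw [Finset.mem_Icc]
      constructor
      · intro h
        exact ⟨hnmin k h, hKmax k h⟩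
      · rintro ⟨h1, h2⟩
        exact ⟨hn.1.trans (ht.monotone h1), (ht.monotone h2).trans_lt hK.2⟩
    have e : (∏ᶠ (k : ℤ) (_ : s ≤ t k ∧ t k < x), (1 + γ k)) = ∏ i ∈ Finset.Icc n K, (1 + γ i) := by
      rw [← finprod_mem_finset_eq_prod]
      simp only [hset]
    rw [e]
    have := hΓ n K (hnmin K hK)
    exact ⟨hΓL.le.trans this.1, this.2.trans (le_max_left _ _)⟩
  · push Not at hne
    have e : (∏ᶠ (k : ℤ) (_ : s ≤ t k ∧ t k < x), (1 + γ k)) = 1 := by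
      apply finprod_eq_one_of_forall_eq_one
      intro k
      have h : ¬ (s ≤ t k ∧ t k < x) := fun h => absurd h.2 (not_lt.2 (hne k h.1))
      simp only [h, finprod_false]
    rw [e]
    exact ⟨zero_le_one, le_max_right _ _⟩

theorem aux_g (T : ℝ) (hT : 0 < T) (v p : ℝ → ℝ)
    (hv : ∀ r ∈ Set.Icc (0 : ℝ) T, 0 ≤ v r)
    (hvint : IntervalIntegrable v volume 0 T)
    (hv1 : ∫ r in (0 : ℝ)..T, v r = 1) (hp : ∀ r, 0 ≤ p r) :
    (∫ r in (0 : ℝ)..T, v r / (1 + p r)) ≤ 1 := by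
  refine le_of_le_of_eq ?_ hv1
  rw [intervalIntegral.integral_of_le hT.le, intervalIntegral.integral_of_le hT.le]
  have hm : ∀ᵐ r ∂(volume.restrict (Set.Ioc 0 T)), r ∈ Set.Ioc 0 T :=
    ae_restrict_mem measurableSet_Ioc
  apply integral_mono_of_nonneg
  · filter_upwards [hm] with r hr
    exact div_nonneg (hv r ⟨hr.1.le, hr.2⟩) (by linarith [hp r])
  · exact (intervalIntegrable_iff_integrableOn_Ioc_of_le hT.le).1 hvint
  · filter_upwards [hm] with r hr
    exact div_le_self (hv r ⟨hr.1.le, hr.2⟩) (by linarith [hp r])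

/-- Upper bound `Fφ(t) ≤ M₁` of Lemma 3.1: for the fixed-point operator
`Fφ(t) = ∫_{-∞}^t H(t,s) g(s) ds + Σ_{t_k < t} H(t,t_k) δ_k` of the impulsive
hematopoiesis model, one has
`Fφ(t) ≤ (A/a_L) Σᵢ (b_{iM}+c_{iM}-H_{iL}) + A δ_M/(1-e^{-a_L η})`. -/
theorem operator_upper_bound
    (t : ℤ → ℝ) (ht : StrictMono t) (η : ℝ) (hη : 0 < η)
    (hgap : ∀ k : ℤ, η ≤ t (k + 1) - t k)
    (γ : ℤ → ℝ) (ΓL ΓM : ℝ) (hΓL : 0 < ΓL)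
    (hΓ : ∀ n k : ℤ, n ≤ k →
      ΓL ≤ ∏ i ∈ Finset.Icc n k, (1 + γ i) ∧ ∏ i ∈ Finset.Icc n k, (1 + γ i) ≤ ΓM)
    (a : ℝ → ℝ) (ha : Continuous a) (aL aM : ℝ) (haL : 0 < aL)
    (hab : ∀ r : ℝ, aL ≤ a r ∧ a r ≤ aM)
    (A : ℝ) (hA : A = max ΓM 1)
    (m : ℕ) (hm : 1 ≤ m)
    (α β : Fin m → ℝ) (hα : ∀ i, 0 < α i) (hβ : ∀ i, 0 < β i)
    (T : ℝ) (hT : 0 < T)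
    (b c : Fin m → ℝ → ℝ) (bM cM : Fin m → ℝ)
    (hb : ∀ i s, 0 ≤ b i s ∧ b i s ≤ bM i)
    (hc : ∀ i s, 0 ≤ c i s ∧ c i s ≤ cM i)
    (v : Fin m → ℝ → ℝ) (hv : ∀ i, ∀ r ∈ Set.Icc (0 : ℝ) T, 0 ≤ v i r)
    (hvint : ∀ i, IntervalIntegrable (v i) volume 0 T)
    (hv1 : ∀ i, ∫ r in (0 : ℝ)..T, v i r = 1)
    (Hh : Fin m → ℝ → ℝ → ℝ) (HL : Fin m → ℝ) (hHL0 : ∀ i, 0 ≤ HL i)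
    (hHh : ∀ i s x, 0 ≤ x → HL i ≤ Hh i s x)
    (τd σd : Fin m → ℝ → ℝ) (hτd : ∀ i s, 0 ≤ τd i s) (hσd : ∀ i s, 0 ≤ σd i s)
    (δ : ℤ → ℝ) (δM : ℝ) (hδM : 0 ≤ δM) (hδ : ∀ k, δ k ≤ δM)
    (φ : ℝ → ℝ) (hφ : ∀ s, 0 ≤ φ s)
    (g : ℝ → ℝ)
    (hg : ∀ s, g s = ∑ i, (b i s / (1 + φ (s - τd i s) ^ α i)
        + c i s * (∫ r in (0 : ℝ)..T, v i r / (1 + φ (s - r) ^ β i))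
        - Hh i s (φ (s - σd i s))))
    (C : ℝ) (hC : C = ∑ i, (bM i + cM i - HL i)) (hC0 : 0 ≤ C)
    (x : ℝ)
    (hint : IntegrableOn (fun s => cauchyH t γ a x s * g s) (Set.Iic x)) :
    (∫ s in Set.Iic x, cauchyH t γ a x s * g s)
      + (∑' k : {k : ℤ // t k < x}, cauchyH t γ a x (t k) * δ k)
      ≤ A / aL * C + A * δM / (1 - Real.exp (-aL * η)) := by
  have hA1 : 1 ≤ A := hA ▸ le_max_right _ _
  have hH0 : ∀ s, 0 ≤ cauchyH t γ a x s := fun s =>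
    mul_nonneg (aux_prod_s9 t ht η hη hgap γ ΓL ΓM hΓL hΓ x s).1 (Real.exp_pos _).le
  have hH : ∀ s, s ≤ x → cauchyH t γ a x s ≤ A * Real.exp (-aL * (x - s)) := by
    intro s hs
    unfold cauchyH
    have hp := (aux_prod_s9 t ht η hη hgap γ ΓL ΓM hΓL hΓ x s).2
    rw [← hA] at hp
    refine mul_le_mul hp ?_ (Real.exp_pos _).le (by linarith)
    apply Real.exp_le_exp.2
    have h1 : ∫ r in s..x, aL ≤ ∫ r in s..x, a r :=
      intervalIntegral.integral_mono_on hs (by simp) (ha.intervalIntegrable _ _)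
        (fun r _ => (hab r).1)
    rw [intervalIntegral.integral_const, smul_eq_mul] at h1
    linarith
  have hgC : ∀ s, g s ≤ C := by
    intro s
    rw [hg, hC]
    apply Finset.sum_le_sum
    intro i _
    have h1 : b i s / (1 + φ (s - τd i s) ^ α i) ≤ bM i :=
      (div_le_self (hb i s).1 (by linarith [Real.rpow_nonneg (hφ (s - τd i s)) (α i)])).trans
        (hb i s).2
    have h2 := aux_g T hT (v i) (fun r => φ (s - r) ^ β i) (hv i) (hvint i) (hv1 i)
      (fun r => Real.rpow_nonneg (hφ _) _)
    have h3 := mul_le_mul_of_nonneg_left h2 (hc i s).1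
    have h4 := hHh i s (φ (s - σd i s)) (hφ _)
    have h5 := (hc i s).2
    linarith
  have hq1 : Real.exp (-aL * η) < 1 := by
    rw [Real.exp_lt_one_iff]
    nlinarith
  have hq0 : 0 < Real.exp (-aL * η) := Real.exp_pos _
  have hAd : 0 ≤ A * δM := mul_nonneg (by linarith) hδM
  have hR : 0 ≤ A * δM / (1 - Real.exp (-aL * η)) := div_nonneg hAd (by linarith)
  apply add_le_add
  · have hI : IntegrableOn (fun s => (A * C * Real.exp (-aL * x)) * Real.exp (aL * s)) (Set.Iic x) :=
      (integrableOn_exp_mul_Iic haL x).const_mul _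
    calc (∫ s in Set.Iic x, cauchyH t γ a x s * g s)
        ≤ ∫ s in Set.Iic x, (A * C * Real.exp (-aL * x)) * Real.exp (aL * s) := by
          apply setIntegral_mono_on hint hI measurableSet_Iic
          intro s hs
          calc cauchyH t γ a x s * g s ≤ cauchyH t γ a x s * C :=
                mul_le_mul_of_nonneg_left (hgC s) (hH0 s)
            _ ≤ (A * Real.exp (-aL * (x - s))) * C := mul_le_mul_of_nonneg_right (hH s hs) hC0
            _ = _ := by
                rw [show -aL * (x - s) = -aL * x + aL * s by ring, Real.exp_add]
                ring
      _ = A / aL * C := by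
          rw [integral_const_mul, integral_exp_mul_Iic haL]
          have : Real.exp (-aL * x) * Real.exp (aL * x) = 1 := by
            rw [← Real.exp_add]; simp
          linear_combination A * C / aL * this
  · by_cases hs : Summable (fun k : {k : ℤ // t k < x} => cauchyH t γ a x (t k) * δ k)
    · apply hs.tsum_le_of_sum_le
      intro F
      rcases F.eq_empty_or_nonempty with rfl | hF
      · simpa using hR
      obtain ⟨K, hKF, hK⟩ := F.exists_max_image (fun k => (k : ℤ)) hF
      have hinj : Set.InjOn (fun k : {k : ℤ // t k < x} => ((K : ℤ) - k).toNat) F := by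
        intro k hk l hl h
        have h1 := hK k hk
        have h2 := hK l hl
        simp only at h h1 h2
        apply Subtype.ext
        omega
      calc ∑ k ∈ F, cauchyH t γ a x (t k) * δ k
          ≤ ∑ k ∈ F, A * δM * Real.exp (-aL * η) ^ (((K : ℤ) - k).toNat) := by
            apply Finset.sum_le_sum
            intro k hk
            have hkK := hK k hk
            have h1 : cauchyH t γ a x (t k) * δ k ≤ cauchyH t γ a x (t k) * δM :=
              mul_le_mul_of_nonneg_left (hδ k) (hH0 _)
            have h2 := mul_le_mul_of_nonneg_right (hH (t k) k.2.le) hδM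
            have h3 : Real.exp (-aL * (x - t k)) ≤ Real.exp (-aL * η) ^ (((K : ℤ) - k).toNat) := by
              rw [← Real.exp_nat_mul]
              apply Real.exp_le_exp.2
              have h4 := aux_growth t η hgap k ((K : ℤ) - k).toNat
              have e : (k : ℤ) + ((((K : ℤ) - k).toNat : ℕ) : ℤ) = K := by omega
              rw [e] at h4
              have h5 := K.2
              have h6 : η * ((((K : ℤ) - k).toNat : ℕ) : ℝ) ≤ x - t k := by linarith
              have h7 := mul_le_mul_of_nonneg_left h6 haL.le
              linarith
            have h8 := mul_le_mul_of_nonneg_left h3 hAd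
            linarith
        _ = ∑ n ∈ F.image (fun k : {k : ℤ // t k < x} => ((K : ℤ) - k).toNat), A * δM * Real.exp (-aL * η) ^ n := by
            rw [Finset.sum_image hinj]
        _ ≤ ∑' n : ℕ, A * δM * Real.exp (-aL * η) ^ n := by
            apply Summable.sum_le_tsum
            · intro n _
              exact mul_nonneg hAd (pow_nonneg hq0.le _)
            · exact (summable_geometric_of_lt_one hq0.le hq1).mul_left _
        _ = _ := by
            rw [tsum_mul_left, tsum_geometric_of_lt_one hq0.le hq1, div_eq_mul_inv]
    · rw [tsum_eq_zero_of_not_summable hs]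
      exact hR
end

section
/- Let (t_k)_{k ∈ ℤ} be a strictly increasing real sequence with t_{k+1} - t_k ≥ η for all k ∈ ℤ, where η > 0. Then for every α > 0 and every t ∈ ℝ, Σ_{k : t_k < t} e^{-α(t - t_k)} ((t - t_k)/η + 1) ≤ (2/(αη) + 1) · 1/(1 - e^{-αη/2}). -/
/-- Inequality (49) in the proof of Theorem 3.1: if the impulse points `t_k` (k ∈ ℤ) are
strictly increasing with gaps at least `η > 0`, then for every `α > 0` and `t ∈ ℝ`,
`Σ_{t_k < t} e^{-α(t - t_k)} ((t - t_k)/η + 1) ≤ (2/(αη) + 1) / (1 - e^{-αη/2})`. -/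
theorem weighted_exp_sum_over_impulses_le
    (t : ℤ → ℝ) (ht : StrictMono t) (η : ℝ) (hη : 0 < η)
    (hgap : ∀ k : ℤ, η ≤ t (k + 1) - t k) (α : ℝ) (hα : 0 < α) (x : ℝ) :
    ∑' k : {k : ℤ // t k < x}, Real.exp (-α * (x - t k)) * ((x - t k) / η + 1)
      ≤ (2 / (α * η) + 1) * (1 / (1 - Real.exp (-α * η / 2))) := by
  have hq0 : 0 < Real.exp (-α * η / 2) := Real.exp_pos _
  have hq1 : Real.exp (-α * η / 2) < 1 := by
    rw [Real.exp_lt_one_iff]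
    have := mul_pos hα hη
    linarith
  have hC : 0 < 2 / (α * η) + 1 := by positivity
  have hterm : ∀ k : {k : ℤ // t k < x},
      Real.exp (-α * (x - t k)) * ((x - t k) / η + 1)
        ≤ (2 / (α * η) + 1) * Real.exp (-α * η / 2) ^ ⌊(x - t k) / η⌋₊ := by
    intro k
    have hy : 0 < x - t k := sub_pos.mpr k.2
    generalize x - t k = y at hy
    have hfl : (⌊y / η⌋₊ : ℝ) * η ≤ y := by
      have := Nat.floor_le (div_nonneg hy.le hη.le)
      rwa [le_div_iff₀ hη] at this
    have hexp : Real.exp (-α * y / 2) ≤ Real.exp (-α * η / 2) ^ ⌊y / η⌋₊ := by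
      rw [← Real.exp_nat_mul, Real.exp_le_exp]
      nlinarith
    have h1 : α * y / 2 + 1 ≤ Real.exp (α * y / 2) := Real.add_one_le_exp _
    have h2 : y / η + 1 ≤ (2 / (α * η) + 1) * Real.exp (α * y / 2) := by
      have e : y / η = 2 / (α * η) * (α * y / 2) := by field_simp
      have hp : 0 < 2 / (α * η) := by positivity
      have hay : 0 < α * y / 2 := by positivity
      rw [e]
      nlinarith
    calc Real.exp (-α * y) * (y / η + 1)
        ≤ Real.exp (-α * y) * ((2 / (α * η) + 1) * Real.exp (α * y / 2)) := by gcongr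
      _ = (2 / (α * η) + 1) * (Real.exp (-α * y) * Real.exp (α * y / 2)) := by ring
      _ = (2 / (α * η) + 1) * Real.exp (-α * y / 2) := by
          rw [← Real.exp_add]; congr 2; ring
      _ ≤ _ := by gcongr
  have hstep : ∀ a b : ℤ, a < b → t a < x → t b < x →
      ⌊(x - t b) / η⌋₊ < ⌊(x - t a) / η⌋₊ := by
    intro a b hab _ hb
    have h1 : t a + η ≤ t b := by
      have := hgap a
      have := ht.monotone (show a + 1 ≤ b by omega)
      linarith
    have h2 : (x - t b) / η + 1 ≤ (x - t a) / η := by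
      rw [div_add_one hη.ne']
      gcongr
      linarith
    have h3 : 0 ≤ (x - t b) / η := div_nonneg (by linarith) hη.le
    have h4 := Nat.floor_le_floor h2
    rw [Nat.floor_add_one h3] at h4
    omega
  have hinj : Function.Injective (fun k : {k : ℤ // t k < x} => ⌊(x - t k) / η⌋₊) := by
    intro a b hab
    simp only at hab
    rcases lt_trichotomy (a : ℤ) b with h | h | h
    · have := hstep a b h a.2 b.2
      omega
    · exact Subtype.ext h
    · have := hstep b a h b.2 a.2
      omega
  have hgeo := summable_geometric_of_lt_one hq0.le hq1
  have hsum : Summable (fun k : {k : ℤ // t k < x} =>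
      Real.exp (-α * η / 2) ^ ⌊(x - t k) / η⌋₊) := hgeo.comp_injective hinj
  have hnn : ∀ k : {k : ℤ // t k < x},
      0 ≤ Real.exp (-α * (x - t k)) * ((x - t k) / η + 1) := by
    intro k
    have hy : 0 < x - t k := sub_pos.mpr k.2
    positivity
  have hb := hsum.mul_left (2 / (α * η) + 1)
  calc _ ≤ ∑' k : {k : ℤ // t k < x},
        (2 / (α * η) + 1) * Real.exp (-α * η / 2) ^ ⌊(x - t k) / η⌋₊ :=
        (Summable.of_nonneg_of_le hnn hterm hb).tsum_le_tsum hterm hb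
    _ = (2 / (α * η) + 1) * ∑' k : {k : ℤ // t k < x},
        Real.exp (-α * η / 2) ^ ⌊(x - t k) / η⌋₊ := tsum_mul_left
    _ ≤ (2 / (α * η) + 1) * ∑' n : ℕ, Real.exp (-α * η / 2) ^ n := by
        refine mul_le_mul_of_nonneg_left ?_ hC.le
        exact hsum.tsum_le_tsum_of_inj _ hinj (fun _ _ => by positivity) (fun _ => le_rfl) hgeo
    _ = _ := by rw [tsum_geometric_of_lt_one hq0.le hq1, one_div]
end

section
/- Let (t_k)_{k ∈ ℤ} be a strictly increasing real sequence with t_{k+1} - t_k ≥ η for all k ∈ ℤ, where η > 0. Then for every α > 0, every c ≥ 0, every ε with 0 ≤ ε ≤ η/2, and every t ∈ ℝ, Σ_{k : t_k < t} e^{-α(t - t_k - ε)} (t - t_k + c) ≤ e^{αη/2} (c + 2/α) · 1/(1 - e^{-αη/2}). -/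
/-- Inequality (48) in the proof of Theorem 3.1: if the impulse points `t_k` (k ∈ ℤ) are
strictly increasing with gaps at least `η > 0`, then for every `α > 0`, `c ≥ 0`,
`0 ≤ ε ≤ η/2` and `t ∈ ℝ`,
`Σ_{t_k < t} e^{-α(t - t_k - ε)} (t - t_k + c) ≤ e^{αη/2} (c + 2/α) / (1 - e^{-αη/2})`. -/
theorem shifted_weighted_exp_sum_over_impulses_le
    (t : ℤ → ℝ) (ht : StrictMono t) (η : ℝ) (hη : 0 < η)
    (hgap : ∀ k : ℤ, η ≤ t (k + 1) - t k) (α : ℝ) (hα : 0 < α)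
    (c : ℝ) (hcpos : 0 ≤ c) (ε : ℝ) (hε : 0 ≤ ε) (hεη : ε ≤ η / 2) (x : ℝ) :
    ∑' k : {k : ℤ // t k < x}, Real.exp (-α * (x - t k - ε)) * (x - t k + c)
      ≤ Real.exp (α * η / 2) * (c + 2 / α) * (1 / (1 - Real.exp (-α * η / 2))) := by
  have hstep : ∀ (k : ℤ) (n : ℕ), t k + n * η ≤ t (k + n) := by
    intro k n
    induction n with
    | zero => simp
    | succ n ih =>
      have h := hgap (k + n)
      have e : k + ((n + 1 : ℕ) : ℤ) = k + n + 1 := by push_cast; ring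
      rw [e]
      push_cast
      linarith
  set r : ℝ := Real.exp (-α * η / 2) with hr
  have hαη : 0 < α * η := mul_pos hα hη
  have hr0 : 0 ≤ r := (Real.exp_pos _).le
  have hr1 : r < 1 := by
    rw [hr, Real.exp_lt_one_iff]
    linarith
  set C : ℝ := Real.exp (α * η / 2) * (c + 2 / α) with hC
  have hC0 : 0 ≤ C := by positivity
  rw [one_div]
  have hinv : 0 ≤ (1 - r)⁻¹ := inv_nonneg.2 (by linarith)
  refine Real.tsum_le_of_sum_le ?_ ?_
  · rintro ⟨k, hk⟩
    have : 0 ≤ x - t k + c := by linarith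
    positivity
  · intro s
    rcases s.eq_empty_or_nonempty with rfl | hs
    · simpa using mul_nonneg hC0 hinv
    · obtain ⟨M, hM, hmax⟩ := s.exists_max_image (fun k => (k : ℤ)) hs
      have hterm : ∀ k ∈ s, Real.exp (-α * (x - t k - ε)) * (x - t k + c)
          ≤ C * r ^ ((M : ℤ) - k).toNat := by
        intro k hk
        have hkM := hmax k hk
        have h1 := hstep k ((M : ℤ) - k).toNat
        have e : (k : ℤ) + (((M : ℤ) - k).toNat : ℤ) = M := by omega
        rw [e] at h1
        have h2 := M.2
        set n := ((M : ℤ) - k).toNat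
        have hy : (n : ℝ) * η ≤ x - t k := by linarith
        have hy0 : 0 ≤ x - t k := by have := k.2; linarith
        generalize x - t k = y at hy hy0
        have e1 : Real.exp (-α * (y - ε))
            = Real.exp (α * ε) * Real.exp (-(α * y / 2)) * Real.exp (-(α * y / 2)) := by
          rw [← Real.exp_add, ← Real.exp_add]; congr 1; ring
        have a1 : Real.exp (α * ε) ≤ Real.exp (α * η / 2) := by
          apply Real.exp_le_exp.2
          nlinarith
        have a2 : Real.exp (-(α * y / 2)) ≤ r ^ n := by
          rw [hr, ← Real.exp_nat_mul]
          apply Real.exp_le_exp.2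
          nlinarith
        have a3 : Real.exp (-(α * y / 2)) * (y + c) ≤ c + 2 / α := by
          have b1 : Real.exp (-(α * y / 2)) ≤ 1 := by
            apply Real.exp_le_one_iff.2
            have := mul_nonneg hα.le hy0
            linarith
          have b2 : Real.exp (-(α * y / 2)) * y ≤ 2 / α := by
            have b3 := Real.add_one_le_exp (α * y / 2)
            rw [Real.exp_neg, inv_mul_le_iff₀ (Real.exp_pos _), mul_div_assoc', le_div_iff₀ hα]
            linarith
          nlinarith
        calc Real.exp (-α * (y - ε)) * (y + c)
            = Real.exp (α * ε) * (Real.exp (-(α * y / 2)) * (y + c))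
              * Real.exp (-(α * y / 2)) := by rw [e1]; ring
          _ ≤ Real.exp (α * η / 2) * (c + 2 / α) * r ^ n := by
              gcongr
      have hinj : Set.InjOn (fun k : {k : ℤ // t k < x} => ((M : ℤ) - k).toNat) s := by
        intro a ha b hb hab
        have := hmax a ha
        have := hmax b hb
        apply Subtype.ext
        simp only at *
        omega
      calc _ ≤ ∑ k ∈ s, C * r ^ ((M : ℤ) - k).toNat := Finset.sum_le_sum hterm
        _ = C * ∑ n ∈ s.image (fun k : {k : ℤ // t k < x} => ((M : ℤ) - k).toNat), r ^ n := by
            rw [Finset.sum_image hinj, Finset.mul_sum]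
        _ ≤ C * (1 - r)⁻¹ := by
            apply mul_le_mul_of_nonneg_left _ hC0
            rw [← tsum_geometric_of_lt_one hr0 hr1]
            exact (summable_geometric_of_lt_one hr0 hr1).sum_le_tsum _
              (fun n _ => pow_nonneg hr0 n)
end
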